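/- Let a₀ = 2·arccos(c) where c = √(75 − 10√5)·√2·(2√5 + 15)/205. Then at side length a₀ both vertex patterns (4,5,10) and (3,4,4,5) have angle defect zero: 2·arcsin(cos(π/4)/c) + 2·arcsin(cos(π/5)/c) + 2·arcsin(cos(π/10)/c) = 2π and 2·arcsin(cos(π/3)/c) + 4·arcsin(cos(π/4)/c) + 2·arcsin(cos(π/5)/c) = 2π. Consequently a_c((4,5,10)) = a_c((3,4,4,5)) = a₀. -/

import Mathlib

/-- The angle defect `K_a(p) = 2π − Σ_{f ∈ p} 2·arcsin(cos(π/f)/cos(a/2))` of a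
vertex pattern given as a list. -/
noncomputable def K (p : List ℕ) (a : ℝ) : ℝ :=
  2 * Real.pi -
    (p.map (fun f => 2 * Real.arcsin (Real.cos (Real.pi / (f : ℝ)) / Real.cos (a / 2)))).sum

/-- The critical side-length `a_c(p) = max{a ∈ [0, 2π/f_N] : K_a(p) ≥ 0}` of a
vertex pattern, where `f_N` is the last (largest) entry. -/
noncomputable def ac (p : List ℕ) : ℝ :=
  sSup {a : ℝ | a ∈ Set.Icc 0 (2 * Real.pi / (p.getLast! : ℝ)) ∧ 0 ≤ K p a}

/-!
By the extended law of sines, `arcsin (x / D)`, `arcsin (y / D)` and `arcsin (z / D)` are the angles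
of a triangle with sides `x`, `y`, `z` and circumdiameter `D`, except that at an obtuse angle the
arcsine is its supplement. The number `c` is the circumdiameter of two triangles with sides of the
form `cos (π / n)`: an acute one for `n = 4, 5, 10`, whose angle sum is the defect identity of
`(4,5,10)`, and an obtuse one for `n = 3, 4, 10`, which says that at side length `a₀` the decagon
angle is the sum of the triangle and square angles. Replacing the decagon by a triangle and a square
turns `(4,5,10)` into `(3,4,4,5)`. Finally, the interior angles increase with the side length, so
the side length at which the defect vanishes is the critical one.
-/

open Real Set

/-- The relation between the sides `x`, `y`, `z` of a Euclidean triangle and its circumdiameter `D`.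
It is encoded polynomially, as `16 A² D² = 4 (x y z)²`, with the area `A` given by Heron's
formula; positivity of the sides and of `D` is assumed separately. -/
def IsCircumdiameter (D x y z : ℝ) : Prop :=
  D ^ 2 * (4 * x ^ 2 * y ^ 2 - (x ^ 2 + y ^ 2 - z ^ 2) ^ 2) = 4 * x ^ 2 * y ^ 2 * z ^ 2

namespace IsCircumdiameter

variable {D x y z : ℝ}

lemma rotate (h : IsCircumdiameter D x y z) : IsCircumdiameter D y z x := by
  unfold IsCircumdiameter at *
  linear_combination h

lemma one_sub_div_sq (h : IsCircumdiameter D x y z) (hD : D ≠ 0) (hy : y ≠ 0) (hz : z ≠ 0) :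
    1 - (x / D) ^ 2 = ((y ^ 2 + z ^ 2 - x ^ 2) / (2 * y * z)) ^ 2 := by
  unfold IsCircumdiameter at h
  field_simp
  linear_combination h

protected lemma div_le_one (h : IsCircumdiameter D x y z) (hD : D ≠ 0) (hy : y ≠ 0) (hz : z ≠ 0) :
    x / D ≤ 1 := by
  have hsq : 0 ≤ 1 - (x / D) ^ 2 := h.one_sub_div_sq hD hy hz ▸ sq_nonneg _
  exact le_of_abs_le ((sq_le_one_iff_abs_le_one _).1 (sub_nonneg.1 hsq))

lemma cos_arcsin_div (h : IsCircumdiameter D x y z) (hD : D ≠ 0) (hy : 0 < y) (hz : 0 < z) :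
    cos (arcsin (x / D)) = |y ^ 2 + z ^ 2 - x ^ 2| / (2 * y * z) := by
  rw [cos_arcsin, h.one_sub_div_sq hD hy.ne' hz.ne', sqrt_sq_eq_abs, abs_div,
    abs_of_pos (by positivity : 0 < 2 * y * z)]

lemma cos_arcsin_add_arcsin (h : IsCircumdiameter D x y z) (hD : 0 < D)
    (hx : 0 < x) (hy : 0 < y) (hz : 0 < z)
    (hxyz : x ^ 2 ≤ y ^ 2 + z ^ 2) (hyzx : y ^ 2 ≤ z ^ 2 + x ^ 2) :
    cos (arcsin (x / D) + arcsin (y / D)) = (z ^ 2 - x ^ 2 - y ^ 2) / (2 * x * y) := by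
  have hxD : 0 ≤ x / D := by positivity
  have hyD : 0 ≤ y / D := by positivity
  rw [cos_add, h.cos_arcsin_div hD.ne' hy hz, h.rotate.cos_arcsin_div hD.ne' hz hx,
    abs_of_nonneg (sub_nonneg.2 hxyz), abs_of_nonneg (sub_nonneg.2 hyzx),
    sin_arcsin (by linarith) (h.div_le_one hD.ne' hy.ne' hz.ne'),
    sin_arcsin (by linarith) (h.rotate.div_le_one hD.ne' hz.ne' hx.ne')]
  unfold IsCircumdiameter at h
  field_simp
  linear_combination h

lemma arcsin_add_arcsin_add_arcsin_of_acute (h : IsCircumdiameter D x y z) (hD : 0 < D)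
    (hx : 0 < x) (hy : 0 < y) (hz : 0 < z) (hxyz : x ^ 2 ≤ y ^ 2 + z ^ 2)
    (hyzx : y ^ 2 ≤ z ^ 2 + x ^ 2) (hzxy : z ^ 2 ≤ x ^ 2 + y ^ 2) :
    arcsin (x / D) + arcsin (y / D) + arcsin (z / D) = π := by
  have hxD : 0 ≤ arcsin (x / D) := arcsin_nonneg.2 (by positivity)
  have hyD : 0 ≤ arcsin (y / D) := arcsin_nonneg.2 (by positivity)
  have hzD : 0 ≤ arcsin (z / D) := arcsin_nonneg.2 (by positivity)
  have hcos : cos (arcsin (x / D) + arcsin (y / D)) = cos (π - arcsin (z / D)) := by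
    rw [h.cos_arcsin_add_arcsin hD hx hy hz hxyz hyzx, cos_pi_sub,
      h.rotate.rotate.cos_arcsin_div hD.ne' hx hy, abs_of_nonneg (sub_nonneg.2 hzxy)]
    ring
  have hsum : arcsin (x / D) + arcsin (y / D) = π - arcsin (z / D) :=
    injOn_cos
      ⟨by linarith, by linarith [arcsin_le_pi_div_two (x / D), arcsin_le_pi_div_two (y / D)]⟩
      ⟨by linarith [arcsin_le_pi_div_two (z / D), pi_pos], by linarith⟩ hcos
  linarith

lemma arcsin_add_arcsin_of_obtuse (h : IsCircumdiameter D x y z) (hD : 0 < D)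
    (hx : 0 < x) (hy : 0 < y) (hz : 0 < z) (hzxy : x ^ 2 + y ^ 2 ≤ z ^ 2) :
    arcsin (x / D) + arcsin (y / D) = arcsin (z / D) := by
  have hxD : 0 ≤ arcsin (x / D) := arcsin_nonneg.2 (by positivity)
  have hyD : 0 ≤ arcsin (y / D) := arcsin_nonneg.2 (by positivity)
  have hzD : 0 ≤ arcsin (z / D) := arcsin_nonneg.2 (by positivity)
  have hcos : cos (arcsin (x / D) + arcsin (y / D)) = cos (arcsin (z / D)) := by
    rw [h.cos_arcsin_add_arcsin hD hx hy hz (by linarith [sq_nonneg y])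
        (by linarith [sq_nonneg x]),
      h.rotate.rotate.cos_arcsin_div hD.ne' hx hy, abs_of_nonpos (sub_nonpos.2 hzxy)]
    ring
  exact injOn_cos
    ⟨by linarith, by linarith [arcsin_le_pi_div_two (x / D), arcsin_le_pi_div_two (y / D)]⟩
    ⟨hzD, by linarith [arcsin_le_pi_div_two (z / D), pi_pos]⟩ hcos

end IsCircumdiameter

/-- The interior angle of a regular spherical `f`-gon with side length `a`; the angle defect `K`
subtracts these angles from `2π`. The number of sides is allowed to be real, and the value is
meaningful only for `0 ≤ a ≤ 2π / f`, where the argument of `arcsin` is at most `1`. -/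
noncomputable def interiorAngle (f a : ℝ) : ℝ :=
  2 * arcsin (cos (π / f) / cos (a / 2))

lemma cos_pi_div_pos {f : ℝ} (hf : 2 < f) : 0 < cos (π / f) := by
  have hlt : π / f < π / 2 := div_lt_div_of_pos_left pi_pos two_pos hf
  have hpos : 0 < π / f := by positivity
  exact cos_pos_of_mem_Ioo ⟨by linarith, hlt⟩

lemma strictMonoOn_interiorAngle {f : ℝ} (hf : 2 < f) :
    StrictMonoOn (interiorAngle f) (Icc 0 (2 * π / f)) := by
  intro a ha b hb hab
  have hπf : π / f ≤ π := div_le_self pi_pos.le (by linarith)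
  have hbf : b / 2 ≤ π / f := by linarith [hb.2, mul_div_assoc 2 π f]
  have hf_pos := cos_pi_div_pos hf
  have hfb : cos (π / f) ≤ cos (b / 2) :=
    cos_le_cos_of_nonneg_of_le_pi (by linarith [hb.1]) hπf hbf
  have hba : cos (b / 2) < cos (a / 2) :=
    cos_lt_cos_of_nonneg_of_le_pi (by linarith [ha.1]) (by linarith) (by linarith)
  have hb_pos : 0 < cos (b / 2) := hf_pos.trans_le hfb
  have ha_nonneg : 0 ≤ cos (π / f) / cos (a / 2) := (div_pos hf_pos (hb_pos.trans hba)).le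
  exact mul_lt_mul_of_pos_left
    (arcsin_lt_arcsin (by linarith) (div_lt_div_of_pos_left hf_pos hb_pos hba)
      ((div_le_one hb_pos).2 hfb)) two_pos

-- In `K`, elaboration coerces the whole list to `List ℝ` (by a monadic bind) before mapping.
lemma K_eq_two_pi_sub_sum (p : List ℕ) (a : ℝ) :
    K p a = 2 * π - (p.map fun f : ℕ ↦ interiorAngle f a).sum := by
  simp [K, interiorAngle, ← List.map_eq_flatMap, Function.comp_def]

lemma K_two_mul_arccos (p : List ℕ) {c : ℝ} (hc₁ : -1 ≤ c) (hc₂ : c ≤ 1) :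
    K p (2 * arccos c) = 2 * π - (p.map fun f : ℕ ↦ 2 * arcsin (cos (π / f) / c)).sum := by
  simp only [K_eq_two_pi_sub_sum, interiorAngle, mul_div_cancel_left₀ _ (two_ne_zero (α := ℝ)),
    cos_arccos hc₁ hc₂]

lemma strictAntiOn_K {p : List ℕ} (hp : p ≠ []) {N : ℕ} (hpN : ∀ f ∈ p, 2 < f ∧ f ≤ N) :
    StrictAntiOn (K p) (Icc 0 (2 * π / N)) := by
  intro a ha b hb hab
  simp only [K_eq_two_pi_sub_sum]
  refine (sub_lt_sub_iff_left _).2 (List.sum_lt_sum_of_ne_nil hp _ _ fun f hf ↦ ?_)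
  obtain ⟨hf_two, hfN⟩ := hpN f hf
  have hsub : Icc 0 (2 * π / N) ⊆ Icc 0 (2 * π / f) := Icc_subset_Icc_right (by gcongr)
  exact strictMonoOn_interiorAngle (by exact_mod_cast hf_two) (hsub ha) (hsub hb) hab

lemma ac_eq_of_K_eq_zero {p : List ℕ} (hp : p ≠ []) (hpN : ∀ f ∈ p, 2 < f ∧ f ≤ p.getLast!)
    {a : ℝ} (ha : a ∈ Icc 0 (2 * π / (p.getLast! : ℝ))) (hK : K p a = 0) : ac p = a :=
  IsGreatest.csSup_eq ⟨⟨ha, hK.ge⟩, fun _b ⟨hb, hKb⟩ ↦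
    ((strictAntiOn_K hp hpN).le_iff_ge ha hb).1 (hK ▸ hKb)⟩

lemma two_mul_arccos_mem_Icc {N c : ℝ} (hN : 1 ≤ N) (hc : cos (π / N) ≤ c) :
    2 * arccos c ∈ Icc 0 (2 * π / N) := by
  have hle : arccos c ≤ π / N := by
    rw [← arccos_cos (by positivity) (div_le_self pi_pos.le hN)]
    exact arccos_le_arccos hc
  exact ⟨by linarith [arccos_nonneg c], by linarith [mul_div_assoc 2 π N]⟩

lemma sq_cos_pi_div_ten : cos (π / 10) ^ 2 = (5 + √5) / 8 := by
  rw [cos_sq, show 2 * (π / 10) = π / 5 by ring, cos_pi_div_five]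
  ring

lemma sq_cos_pi_div_five : cos (π / 5) ^ 2 = (3 + √5) / 8 := by
  rw [cos_pi_div_five]
  linear_combination sq_sqrt (show (0 : ℝ) ≤ 5 by norm_num) / 16

lemma sq_cos_pi_div_four : cos (π / 4) ^ 2 = 1 / 2 := by
  rw [cos_pi_div_four]
  linear_combination sq_sqrt (show (0 : ℝ) ≤ 2 by norm_num) / 4

lemma sqrt_five_lt : √5 < 5 / 2 :=
  (sqrt_lt' (by norm_num)).2 (by norm_num)

/-- The number `c = cos (a₀ / 2)`, for the common critical side length `a₀` of `(4,5,10)` and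
`(3,4,4,5)`, in the closed form of the theorem. -/
noncomputable def cosHalfCritical : ℝ :=
  √(75 - 10 * √5) * √2 * (2 * √5 + 15) / 205

lemma cosHalfCritical_pos : 0 < cosHalfCritical := by
  have h : 0 < √(75 - 10 * √5) := sqrt_pos.2 (by linarith [sqrt_five_lt])
  unfold cosHalfCritical
  positivity

lemma cosHalfCritical_sq : cosHalfCritical ^ 2 = (30 + 4 * √5) / 41 := by
  have h5 : √5 ^ 2 = 5 := sq_sqrt (by norm_num)
  rw [cosHalfCritical, div_pow, mul_pow, mul_pow, sq_sqrt (by linarith [sqrt_five_lt]),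
    sq_sqrt zero_le_two]
  linear_combination (-80 * √5 - 600) / 42025 * h5

lemma cosHalfCritical_le_one : cosHalfCritical ≤ 1 := by
  refine (sq_le_one_iff₀ cosHalfCritical_pos.le).1 ?_
  linarith [cosHalfCritical_sq, sqrt_five_lt]

lemma cos_pi_div_ten_le_cosHalfCritical : cos (π / 10) ≤ cosHalfCritical := by
  refine le_of_sq_le_sq ?_ cosHalfCritical_pos.le
  linarith [sq_cos_pi_div_ten, cosHalfCritical_sq, sqrt_five_lt]

lemma cos_pi_div_five_le_cosHalfCritical : cos (π / 5) ≤ cosHalfCritical :=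
  (cos_le_cos_of_nonneg_of_le_pi (by positivity) (by linarith [pi_pos])
    (by linarith [pi_pos])).trans cos_pi_div_ten_le_cosHalfCritical

lemma isCircumdiameter_four_five_ten :
    IsCircumdiameter cosHalfCritical (cos (π / 4)) (cos (π / 5)) (cos (π / 10)) := by
  rw [IsCircumdiameter, cosHalfCritical_sq, sq_cos_pi_div_four, sq_cos_pi_div_five,
    sq_cos_pi_div_ten]
  linear_combination (1 / 41 - 1 / 32) * sq_sqrt (show (0 : ℝ) ≤ 5 by norm_num)

lemma isCircumdiameter_three_four_ten :
    IsCircumdiameter cosHalfCritical (cos (π / 3)) (cos (π / 4)) (cos (π / 10)) := by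
  rw [IsCircumdiameter, cosHalfCritical_sq, cos_pi_div_three, sq_cos_pi_div_four,
    sq_cos_pi_div_ten]
  linear_combination -(4 * √5 + 22) / 2624 * sq_sqrt (show (0 : ℝ) ≤ 5 by norm_num)

lemma arcsin_cos_pi_div_four_add_five_add_ten :
    arcsin (cos (π / 4) / cosHalfCritical) + arcsin (cos (π / 5) / cosHalfCritical) +
      arcsin (cos (π / 10) / cosHalfCritical) = π := by
  have h4 := sq_cos_pi_div_four
  have h5 := sq_cos_pi_div_five
  have h10 := sq_cos_pi_div_ten
  have h := sqrt_nonneg 5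
  exact isCircumdiameter_four_five_ten.arcsin_add_arcsin_add_arcsin_of_acute cosHalfCritical_pos
    (cos_pi_div_pos (by norm_num)) (cos_pi_div_pos (by norm_num)) (cos_pi_div_pos (by norm_num))
    (by linarith) (by linarith) (by linarith [sqrt_five_lt])

lemma arcsin_cos_pi_div_three_add_four :
    arcsin (cos (π / 3) / cosHalfCritical) + arcsin (cos (π / 4) / cosHalfCritical) =
      arcsin (cos (π / 10) / cosHalfCritical) := by
  refine isCircumdiameter_three_four_ten.arcsin_add_arcsin_of_obtuse cosHalfCritical_pos
    (cos_pi_div_pos (by norm_num)) (cos_pi_div_pos (by norm_num)) (cos_pi_div_pos (by norm_num)) ?_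
  have h : 1 ≤ √5 := one_le_sqrt.2 (by norm_num)
  rw [cos_pi_div_three, sq_cos_pi_div_four, sq_cos_pi_div_ten]
  linarith

/-- Let a₀ = 2·arccos c, c = √(75 − 10√5)·√2·(2√5 + 15)/205.  At side length a₀ both
patterns (4,5,10) and (3,4,4,5) have angle defect zero, so
a_c((4,5,10)) = a_c((3,4,4,5)) = a₀. -/
theorem stmt13 (c a0 : ℝ)
    (hc : c = Real.sqrt (75 - 10 * Real.sqrt 5) * Real.sqrt 2 * (2 * Real.sqrt 5 + 15) / 205)
    (ha0 : a0 = 2 * Real.arccos c) :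
    2 * Real.arcsin (Real.cos (Real.pi / 4) / c) +
      2 * Real.arcsin (Real.cos (Real.pi / 5) / c) +
      2 * Real.arcsin (Real.cos (Real.pi / 10) / c) = 2 * Real.pi ∧
    2 * Real.arcsin (Real.cos (Real.pi / 3) / c) +
      4 * Real.arcsin (Real.cos (Real.pi / 4) / c) +
      2 * Real.arcsin (Real.cos (Real.pi / 5) / c) = 2 * Real.pi ∧
    K [4, 5, 10] a0 = 0 ∧ K [3, 4, 4, 5] a0 = 0 ∧
    ac [4, 5, 10] = a0 ∧ ac [3, 4, 4, 5] = a0 := by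
  obtain rfl : c = cosHalfCritical := hc
  subst ha0
  have hK (p : List ℕ) := K_two_mul_arccos p
    (by linarith [cosHalfCritical_pos]) cosHalfCritical_le_one
  have h4510 := arcsin_cos_pi_div_four_add_five_add_ten
  have h34 := arcsin_cos_pi_div_three_add_four
  have hK4510 : K [4, 5, 10] (2 * arccos cosHalfCritical) = 0 := by
    simp only [hK, List.map_cons, List.map_nil, List.sum_cons, List.sum_nil, Nat.cast_ofNat]
    linarith
  have hK3445 : K [3, 4, 4, 5] (2 * arccos cosHalfCritical) = 0 := by
    simp only [hK, List.map_cons, List.map_nil, List.sum_cons, List.sum_nil, Nat.cast_ofNat]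
    linarith
  refine ⟨by linarith, by linarith, hK4510, hK3445,
    ac_eq_of_K_eq_zero (by simp) (by simp) ?_ hK4510,
    ac_eq_of_K_eq_zero (by simp) (by simp) ?_ hK3445⟩
  · exact two_mul_arccos_mem_Icc (by simp) (by simpa using cos_pi_div_ten_le_cosHalfCritical)
  · exact two_mul_arccos_mem_Icc (by simp) (by simpa using cos_pi_div_five_le_cosHalfCritical)
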